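/- Let P be an antisymmetric r×r integer matrix. Then there exists an integer matrix X with det X = ±1 such that X^T P X is block diagonal of the form diag( [[0,h_1],[−h_1,0]], …, [[0,h_k],[−h_k,0]], 0, …, 0 ) where h_1,…,h_k are nonzero integers with h_i dividing h_{i+1} for 1 ≤ i ≤ k−1. -/

import Mathlib

/-- The block-diagonal `r × r` integer matrix
`diag([[0,h₁],[−h₁,0]], …, [[0,h_k],[−h_k,0]], 0, …, 0)`. -/
def skewBlockDiag (r k : ℕ) (h : Fin k → ℤ) : Matrix (Fin r) (Fin r) ℤ :=
  Matrix.of fun i j =>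
    if hp : i.val / 2 < k ∧ i.val / 2 = j.val / 2 then
      if i.val % 2 = 0 ∧ j.val % 2 = 1 then h ⟨i.val / 2, hp.1⟩
      else if i.val % 2 = 1 ∧ j.val % 2 = 0 then -h ⟨i.val / 2, hp.1⟩
      else 0
    else 0

section SkewForm

variable {M : Type*} [AddCommGroup M]

/-- If `d` is minimal in absolute value among the nonzero values of `B`, then `d` divides every `a`
whose remainder modulo `d` is a value of `B`. -/
theorem dvd_of_emod_eq_value {B : M →ₗ[ℤ] M →ₗ[ℤ] ℤ} {d : ℤ} (hd : d ≠ 0)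
    (hmin : ∀ z w, B z w ≠ 0 → d.natAbs ≤ (B z w).natAbs) {a : ℤ} {z w : M}
    (h : B z w = a % d) : d ∣ a := by
  by_contra hda
  have h0 : a % d ≠ 0 := fun h' => hda (Int.dvd_of_emod_eq_zero h')
  have h1 := hmin z w (h ▸ h0)
  rw [h] at h1
  have h2 := Int.emod_nonneg a hd
  have h3 := Int.emod_lt_abs a hd
  rw [Int.abs_eq_natAbs] at h3
  omega

/-- A nonzero value of minimal absolute value of a bilinear form divides every value of the form. -/
theorem minimal_value_dvd {B : M →ₗ[ℤ] M →ₗ[ℤ] ℤ} {x y : M}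
    (hxy : B x y ≠ 0) (hmin : ∀ z w, B z w ≠ 0 → (B x y).natAbs ≤ (B z w).natAbs) (z w : M) :
    B x y ∣ B z w := by
  have hx : ∀ u, B x y ∣ B x u := fun u =>
    dvd_of_emod_eq_value hxy hmin (z := x) (w := u - (B x u / B x y) • y) <| by
      rw [Int.emod_def]; simp [mul_comm]
  have hy : ∀ u, B x y ∣ B u y := fun u =>
    dvd_of_emod_eq_value hxy hmin (z := u - (B u y / B x y) • x) (w := y) <| by
      rw [Int.emod_def]; simp [mul_comm]
  obtain ⟨a, ha⟩ := hy z
  obtain ⟨b, hb⟩ := hx w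
  have key : B x y ∣ B z w - a * B x w := by
    refine dvd_of_emod_eq_value hxy hmin (z := x + (z - a • x))
      (w := (w - b • y) - ((B z w - a * B x w) / B x y) • y) ?_
    rw [Int.emod_def]
    simp [ha, hb]
    ring
  exact (dvd_sub_left ((hx w).mul_left a)).mp key

theorem exists_minimal_value {B : M →ₗ[ℤ] M →ₗ[ℤ] ℤ} (hB : B ≠ 0) :
    ∃ x y, B x y ≠ 0 ∧ ∀ z w, B z w ≠ 0 → (B x y).natAbs ≤ (B z w).natAbs := by
  have hne : {p : M × M | B p.1 p.2 ≠ 0}.Nonempty := by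
    by_contra! h
    refine hB (LinearMap.ext₂ fun x y => ?_)
    by_contra hxy
    exact (h ▸ hxy : (x, y) ∈ (∅ : Set (M × M)))
  obtain ⟨p, hp, hmin⟩ := exists_minimalFor_of_wellFoundedLT
    (· ∈ {p : M × M | B p.1 p.2 ≠ 0}) (fun p => (B p.1 p.2).natAbs) hne
  refine ⟨p.1, p.2, hp, fun z w hzw => ?_⟩
  by_contra! hlt
  exact absurd (hmin (j := (z, w)) hzw hlt.le) (not_le.mpr hlt)

/-- If `B x y` divides all values of the skew form `B`, a basis of the orthogonal complement
of `x, y` extends by `x, y` to a basis of the whole module. -/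
theorem exists_basis_of_orthogonal {B : M →ₗ[ℤ] M →ₗ[ℤ] ℤ} (hB : ∀ x y, B x y = -B y x)
    {x y : M} (hxy : B x y ≠ 0) (hdvd : ∀ z w, B x y ∣ B z w) {m : ℕ}
    (c : Module.Basis (Fin m) ℤ ↥(LinearMap.ker (B x) ⊓ LinearMap.ker (B y))) :
    ∃ b : Module.Basis (Fin (m + 2)) ℤ M,
      b 0 = x ∧ b 1 = y ∧ ∀ i : Fin m, b i.succ.succ = c i := by
  have h0 : ∀ u, B u u = 0 := fun u => by have := hB u u; omega
  have hyx : B y x = -B x y := hB y x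
  let c' : Module.Basis (Fin (m + 1)) ℤ ↥(LinearMap.ker (B y)) :=
    Module.Basis.mkFinConsOfLE y (h0 y) c inf_le_right
      (fun a u hu h => by
        have := congrArg (B x) h
        have hu' : B x u = 0 := hu.1
        simpa [hu', hxy] using this)
      (fun z hz => by
        obtain ⟨q, hq⟩ := hdvd x z
        have hz' : B y z = 0 := hz
        refine ⟨-q, ?_, ?_⟩ <;> simp [hq, hz', h0, mul_comm])
  let b : Module.Basis (Fin (m + 2)) ℤ M := Module.Basis.mkFinCons x c'
    (fun a u hu h => by
      have := congrArg (B y) h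
      have hu' : B y u = 0 := hu
      simpa [hu', hyx, hxy] using this)
    (fun z => by
      obtain ⟨q, hq⟩ := hdvd y z
      refine ⟨q, ?_⟩
      simp [hq, hyx, mul_comm])
  have hb : (b : Fin (m + 2) → M) = Fin.cons x ((↑) ∘ c') := Module.Basis.coe_mkFinCons ..
  have hc' : (c' : Fin (m + 1) → _) = Fin.cons ⟨y, h0 y⟩ (Submodule.inclusion inf_le_right ∘ c) :=
    Module.Basis.coe_mkFinConsOfLE ..
  refine ⟨b, by simp [hb], ?_, fun i => ?_⟩
  · rw [hb, ← Fin.succ_zero_eq_one, Fin.cons_succ, Function.comp_apply, hc', Fin.cons_zero]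
  · rw [hb, Fin.cons_succ, Function.comp_apply, hc', Fin.cons_succ]
    rfl

theorem skewBlockDiag_cons_succ_succ {m k : ℕ} (d : ℤ) (h : Fin k → ℤ) (i j : Fin m) :
    skewBlockDiag (m + 2) (k + 1) (Fin.cons d h) i.succ.succ j.succ.succ =
      skewBlockDiag m k h i j := by
  have hdiv : ∀ a : ℕ, (a + 1 + 1) / 2 = a / 2 + 1 := fun a => by omega
  have hmod : ∀ a : ℕ, (a + 1 + 1) % 2 = a % 2 := fun a => by omega
  have hcons : ∀ (a : ℕ) (ha : a + 1 < k + 1),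
      (Fin.cons d h : Fin (k + 1) → ℤ) ⟨a + 1, ha⟩ = h ⟨a, by omega⟩ := fun a ha => rfl
  simp [skewBlockDiag, hdiv, hmod, hcons]

theorem skewBlockDiag_swap {r k : ℕ} (h : Fin k → ℤ) (i j : Fin r) :
    skewBlockDiag r k h i j = -skewBlockDiag r k h j i := by
  simp only [skewBlockDiag, Matrix.of_apply]
  grind

/-- A skew form on a finite free `ℤ`-module has a basis in which its Gram matrix is block
diagonal, with the nonzero blocks forming a divisibility chain. -/
theorem exists_basis_skewBlockDiag (n : ℕ) {M : Type*} [AddCommGroup M] [Module.Free ℤ M]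
    [Module.Finite ℤ M] (hn : Module.finrank ℤ M = n) (B : M →ₗ[ℤ] M →ₗ[ℤ] ℤ)
    (hB : ∀ x y, B x y = -B y x) :
    ∃ (b : Module.Basis (Fin n) ℤ M) (k : ℕ) (h : Fin k → ℤ),
      2 * k ≤ n ∧ (∀ i, h i ≠ 0) ∧
      (∀ (i : ℕ) (hi : i + 1 < k), h ⟨i, by omega⟩ ∣ h ⟨i + 1, hi⟩) ∧
      ∀ i j, B (b i) (b j) = skewBlockDiag n k h i j := by
  induction n using Nat.strong_induction_on generalizing M with
  | _ n ih =>
  by_cases hB0 : B = 0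
  · exact ⟨Module.finBasisOfFinrankEq ℤ M hn, 0, Fin.elim0, by omega, fun i => i.elim0,
      fun i hi => by omega, fun i j => by simp [hB0, skewBlockDiag]⟩
  obtain ⟨x, y, hxy, hmin⟩ := exists_minimal_value hB0
  have hdvd := minimal_value_dvd hxy hmin
  have h0 : ∀ u, B u u = 0 := fun u => by have := hB u u; omega
  set N := LinearMap.ker (B x) ⊓ LinearMap.ker (B y)
  obtain ⟨m, hm⟩ : ∃ m, Module.finrank ℤ N = m := ⟨_, rfl⟩
  obtain rfl : n = m + 2 := by
    obtain ⟨b, -⟩ := exists_basis_of_orthogonal hB hxy hdvd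
      (Module.finBasisOfFinrankEq ℤ N hm)
    rw [← hn, Module.finrank_eq_card_basis b, Fintype.card_fin]
  obtain ⟨c, k, h, hk, hne, hchain, hc⟩ := ih m (by omega) hm (B.domRestrict₁₂ N N)
    fun u v => hB u v
  obtain ⟨b, hb0, hb1, hb⟩ := exists_basis_of_orthogonal hB hxy hdvd c
  have hxc : ∀ i, B x (c i) = 0 := fun i => (c i).2.1
  have hyc : ∀ i, B y (c i) = 0 := fun i => (c i).2.2
  refine ⟨b, k + 1, Fin.cons (B x y) h, by omega, Fin.cases hxy hne, ?_, ?_⟩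
  · rintro (_ | i) hi
    · have hval : h ⟨0, by omega⟩ =
          B (c ⟨0, by omega⟩) (c ⟨1, by omega⟩) := by
        refine Eq.trans ?_ (hc _ _).symm
        simp [skewBlockDiag, show 0 < k by omega]
      change B x y ∣ h ⟨0, by omega⟩
      exact hval ▸ hdvd _ _
    · exact hchain i (by omega)
  · have hupper : ∀ i j : Fin (m + 2), i ≤ j →
        B (b i) (b j) = skewBlockDiag (m + 2) (k + 1) (Fin.cons (B x y) h) i j := by
      intro i j hij
      induction i using Fin.cases with
      | zero =>
        induction j using Fin.cases with
        | zero => simp [h0, skewBlockDiag]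
        | succ j =>
          induction j using Fin.cases with
          | zero => simp [hb0, hb1, skewBlockDiag]
          | succ j => simp [hb0, hb, hxc, skewBlockDiag]; omega
      | succ i =>
        induction j using Fin.cases with
        | zero => simp at hij
        | succ j =>
          induction i using Fin.cases with
          | zero =>
            induction j using Fin.cases with
            | zero => simp [h0, skewBlockDiag]
            | succ j => simp [hb1, hb, hyc, skewBlockDiag]; omega
          | succ i =>
            induction j using Fin.cases with
            | zero => simp [Fin.le_def] at hij
            | succ j => rw [skewBlockDiag_cons_succ_succ, ← hc, hb, hb]; rfl
    intro i j
    rcases le_total i j with hij | hij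
    · exact hupper i j hij
    · rw [hB, skewBlockDiag_swap, hupper j i hij]

end SkewForm

theorem stmt11 (r : ℕ) (P : Matrix (Fin r) (Fin r) ℤ) (hP : P.transpose = -P) :
    ∃ (X : Matrix (Fin r) (Fin r) ℤ) (k : ℕ) (h : Fin k → ℤ),
      (X.det = 1 ∨ X.det = -1) ∧ 2 * k ≤ r ∧ (∀ i, h i ≠ 0) ∧
      (∀ (i : ℕ) (hi : i + 1 < k), h ⟨i, by omega⟩ ∣ h ⟨i + 1, hi⟩) ∧
      X.transpose * P * X = skewBlockDiag r k h := by
  have hskew : ∀ x y : Fin r → ℤ, Matrix.toLinearMap₂' ℤ P x y = -Matrix.toLinearMap₂' ℤ P y x := by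
    intro x y
    rw [Matrix.toLinearMap₂'_apply', Matrix.toLinearMap₂'_apply', Matrix.dotProduct_mulVec,
      dotProduct_comm, ← Matrix.mulVec_transpose, hP, Matrix.neg_mulVec, dotProduct_neg]
  obtain ⟨b, k, h, hk, hne, hchain, hb⟩ :=
    exists_basis_skewBlockDiag r (by simp) (Matrix.toLinearMap₂' ℤ P) hskew
  refine ⟨(Pi.basisFun ℤ (Fin r)).toMatrix b, k, h, ?_, hk, hne, hchain, ?_⟩
  · have := (Pi.basisFun ℤ (Fin r)).invertibleToMatrix b
    exact Int.isUnit_iff.mp (Matrix.isUnit_det_of_invertible _)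
  · ext i j
    rw [← hb, Matrix.toLinearMap₂'_apply', Matrix.mul_assoc]
    rfl
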